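/- arXiv:1501.05070 — 2 statements merged into one kernel-verified Lean document; each statement's English description precedes it below -/
import Mathlib

section
/- The function f(x) = ((x/sin x)^2 - x·cot x)/(1 - x·cot x) is strictly increasing on (0, π/2), with limit 2 as x → 0+ and limit π²/4 as x → π/2−. -/
open Real Set Filter Topology

noncomputable def f3 (x : ℝ) : ℝ :=
  ((x / Real.sin x) ^ 2 - x * (Real.cos x / Real.sin x)) /
    (1 - x * (Real.cos x / Real.sin x))

/-- A function with positive derivative on `(0, b)`, continuous and vanishing at `0`, is positive. -/
lemma pos_of_hasDerivAt_pos {g g' : ℝ → ℝ} {b : ℝ} (hg : ∀ x, HasDerivAt g (g' x) x)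
    (h0 : g 0 = 0) (hpos : ∀ x ∈ Ioo 0 b, 0 < g' x) {x : ℝ} (hx : x ∈ Ioo 0 b) : 0 < g x := by
  have hmono : StrictMonoOn g (Icc 0 x) := by
    refine strictMonoOn_of_deriv_pos (convex_Icc 0 x)
      (fun y _ => (hg y).continuousAt.continuousWithinAt) fun y hy => ?_
    rw [interior_Icc] at hy
    rw [(hg y).deriv]
    exact hpos y ⟨hy.1, hy.2.trans hx.2⟩
  simpa [h0] using hmono (left_mem_Icc.2 hx.1.le) (right_mem_Icc.2 hx.1.le) hx.1

lemma sub_cube_div_six_lt_sin {x : ℝ} (hx : 0 < x) : x - x ^ 3 / 6 < sin x := by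
  have hd : ∀ y : ℝ, HasDerivAt (fun y => sin y - (y - y ^ 3 / 6))
      (cos y - (1 - y ^ 2 / 2)) y := fun y => by
    refine HasDerivAt.congr_deriv
      ((hasDerivAt_sin y).sub ((hasDerivAt_id' y).sub (((hasDerivAt_id' y).pow 3).div_const 6))) ?_
    simp; ring
  have := pos_of_hasDerivAt_pos (b := x + 1) hd (by simp)
    (fun y hy => sub_pos.2 (one_sub_sq_div_two_lt_cos hy.1.ne')) ⟨hx, by linarith⟩
  linarith

lemma cos_lt_taylor_four {x : ℝ} (hx : 0 < x) : cos x < 1 - x ^ 2 / 2 + x ^ 4 / 24 := by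
  have hd : ∀ y : ℝ, HasDerivAt (fun y => (1 - y ^ 2 / 2 + y ^ 4 / 24) - cos y)
      (sin y - (y - y ^ 3 / 6)) y := fun y => by
    refine HasDerivAt.congr_deriv
      (((((hasDerivAt_id' y).pow 2).div_const 2).const_sub 1 |>.add
      (((hasDerivAt_id' y).pow 4).div_const 24)).sub (hasDerivAt_cos y)) ?_
    simp; ring
  have := pos_of_hasDerivAt_pos (b := x + 1) hd (by simp)
    (fun y hy => sub_pos.2 (sub_cube_div_six_lt_sin hy.1)) ⟨hx, by linarith⟩
  linarith

lemma cube_mul_cos_lt_sin_cube {x : ℝ} (hx : x ∈ Ioo 0 (π / 2)) :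
    x ^ 3 * cos x < sin x ^ 3 := by
  obtain ⟨h0, h1⟩ := hx
  have h2 : x < 2 := by linarith [pi_lt_four]
  have hsq : x ^ 2 < 4 := by nlinarith
  have hs : (x - x ^ 3 / 6) ^ 3 < sin x ^ 3 :=
    pow_lt_pow_left₀ (sub_cube_div_six_lt_sin h0) (by nlinarith) (by norm_num)
  have hc : x ^ 3 * cos x < x ^ 3 * (1 - x ^ 2 / 2 + x ^ 4 / 24) :=
    mul_lt_mul_of_pos_left (cos_lt_taylor_four h0) (by positivity)
  have hp : 0 < x ^ 7 * (9 - x ^ 2) := mul_pos (by positivity) (by linarith)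
  linarith [show (x - x ^ 3 / 6) ^ 3 - x ^ 3 * (1 - x ^ 2 / 2 + x ^ 4 / 24) =
    x ^ 7 * (9 - x ^ 2) / 216 by ring]

lemma hasDerivAt_sin_mul_cos (x : ℝ) :
    HasDerivAt (fun y => sin y * cos y) (cos x ^ 2 - sin x ^ 2) x := by
  refine HasDerivAt.congr_deriv ((hasDerivAt_sin x).mul (hasDerivAt_cos x)) ?_
  ring

lemma hasDerivAt_sin_sub_mul_cos (x : ℝ) :
    HasDerivAt (fun y => sin y - y * cos y) (x * sin x) x := by
  refine HasDerivAt.congr_deriv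
      ((hasDerivAt_sin x).sub ((hasDerivAt_id' x).mul (hasDerivAt_cos x))) ?_
  simp

lemma sin_sub_mul_cos_pos {x : ℝ} (hx : x ∈ Ioo 0 (π / 2)) : 0 < sin x - x * cos x :=
  pos_of_hasDerivAt_pos hasDerivAt_sin_sub_mul_cos (by simp)
    (fun y hy => mul_pos hy.1 (sin_pos_of_pos_of_lt_pi hy.1 (by linarith [hy.2, pi_pos]))) hx

lemma two_mul_mul_sq_sub_pos {x : ℝ} (hx : x ∈ Ioo 0 (π / 2)) :
    0 < 2 * x * (sin x - x * cos x) ^ 2 - (x ^ 2 - sin x ^ 2) * (x - sin x * cos x) := by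
  refine pos_of_hasDerivAt_pos
    (g := fun x => 2 * x * (sin x - x * cos x) ^ 2 - (x ^ 2 - sin x ^ 2) * (x - sin x * cos x))
    (g' := fun x => 4 * sin x * (sin x ^ 3 - x ^ 3 * cos x)) (fun y => ?_) (by simp)
    (fun y hy => ?_) hx
  · refine HasDerivAt.congr_deriv
      ((((hasDerivAt_id' y).const_mul 2).mul ((hasDerivAt_sin_sub_mul_cos y).pow 2)).sub
      ((((hasDerivAt_id' y).pow 2).sub ((hasDerivAt_sin y).pow 2)).mul
        ((hasDerivAt_id' y).sub (hasDerivAt_sin_mul_cos y)))) ?_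
    have h := sin_sq_add_cos_sq y
    simp
    grind
  · exact mul_pos (mul_pos four_pos (sin_pos_of_pos_of_lt_pi hy.1 (by linarith [hy.2, pi_pos])))
      (sub_pos.2 (cube_mul_cos_lt_sin_cube hy))

lemma f3_eq {x : ℝ} (hx : sin x ≠ 0) :
    f3 x = (x * (x - sin x * cos x)) / (sin x * (sin x - x * cos x)) := by
  rw [f3, ← mul_div_mul_left _ _ (pow_ne_zero 2 hx)]
  congr 1 <;> field_simp

lemma strictMonoOn_f3 : StrictMonoOn f3 (Ioo 0 (π / 2)) := by
  have hsin : ∀ x ∈ Ioo 0 (π / 2), 0 < sin x := fun x hx =>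
    sin_pos_of_pos_of_lt_pi hx.1 (by linarith [hx.2, pi_pos])
  have hden : ∀ x ∈ Ioo 0 (π / 2), 0 < sin x * (sin x - x * cos x) := fun x hx =>
    mul_pos (hsin x hx) (sin_sub_mul_cos_pos hx)
  have hd : ∀ x ∈ Ioo 0 (π / 2), HasDerivAt
      (fun x => (x * (x - sin x * cos x)) / (sin x * (sin x - x * cos x)))
      ((2 * x * (sin x - x * cos x) ^ 2 - (x ^ 2 - sin x ^ 2) * (x - sin x * cos x)) /
        (sin x * (sin x - x * cos x)) ^ 2) x := fun x hx => by
    refine HasDerivAt.congr_deriv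
      (((hasDerivAt_id' x).mul ((hasDerivAt_id' x).sub (hasDerivAt_sin_mul_cos x))).div
      ((hasDerivAt_sin x).mul (hasDerivAt_sin_sub_mul_cos x)) (hden x hx).ne') ?_
    have h := sin_sq_add_cos_sq x
    congr 1
    simp
    grind
  refine StrictMonoOn.congr (strictMonoOn_of_deriv_pos (convex_Ioo _ _)
    (fun x hx => (hd x hx).continuousAt.continuousWithinAt) fun x hx => ?_)
    fun x hx => (f3_eq (hsin x hx).ne').symm
  rw [interior_Ioo] at hx
  rw [(hd x hx).deriv]
  exact div_pos (two_mul_mul_sq_sub_pos hx) (pow_pos (hden x hx) 2)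

lemma tendsto_sin_div_self_nhdsGT_zero :
    Tendsto (fun x : ℝ => sin x / x) (𝓝[>] 0) (𝓝 1) := by
  have h := (hasDerivAt_sin 0).tendsto_slope_zero_right
  simpa [div_eq_inv_mul] using h

lemma tendsto_f3_zero : Tendsto f3 (𝓝[>] 0) (𝓝 2) := by
  have hmem : ∀ᶠ x : ℝ in 𝓝[>] 0, x ∈ Ioo 0 (π / 2) := Ioo_mem_nhdsGT (by positivity)
  have hsin : ∀ᶠ x : ℝ in 𝓝[>] 0, 0 < sin x := hmem.mono fun x hx =>
    sin_pos_of_pos_of_lt_pi hx.1 (by linarith [hx.2, pi_pos])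
  have hratio : Tendsto (fun x => (x - sin x * cos x) / (sin x - x * cos x)) (𝓝[>] 0) (𝓝 2) := by
    refine HasDerivAt.lhopital_zero_nhdsGT
      (f' := fun x => 1 - (cos x ^ 2 - sin x ^ 2)) (g' := fun x => x * sin x)
      (.of_forall fun x => (hasDerivAt_id' x).sub (hasDerivAt_sin_mul_cos x))
      (.of_forall hasDerivAt_sin_sub_mul_cos) ?_ ?_ ?_ ?_
    · filter_upwards [hmem, hsin] with x hx hs using (mul_pos hx.1 hs).ne'
    · exact (Continuous.tendsto' (by fun_prop) _ _ (by simp)).mono_left nhdsWithin_le_nhds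
    · exact (Continuous.tendsto' (by fun_prop) _ _ (by simp)).mono_left nhdsWithin_le_nhds
    · have h := tendsto_sin_div_self_nhdsGT_zero.const_mul 2
      rw [mul_one] at h
      refine h.congr' ?_
      filter_upwards [hmem, hsin] with x hx hs
      have hx0 := hx.1.ne'
      rw [cos_sq']
      field_simp
      ring
  have h := (tendsto_sin_div_self_nhdsGT_zero.inv₀ one_ne_zero).mul hratio
  rw [inv_one, one_mul] at h
  refine h.congr' ?_
  filter_upwards [hsin] with x hs
  rw [f3_eq hs.ne', inv_div, div_mul_div_comm]

lemma tendsto_f3_pi_div_two : Tendsto f3 (𝓝[<] (π / 2)) (𝓝 (π ^ 2 / 4)) := by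
  have hc : ContinuousAt f3 (π / 2) := by
    unfold f3
    fun_prop (disch := simp)
  have hv : f3 (π / 2) = π ^ 2 / 4 := by
    simp [f3]
    ring
  exact hv ▸ hc.tendsto.mono_left nhdsWithin_le_nhds

theorem stmt3 :
    StrictMonoOn f3 (Ioo 0 (π / 2)) ∧
    Filter.Tendsto f3 (nhdsWithin 0 (Ioi 0)) (nhds 2) ∧
    Filter.Tendsto f3 (nhdsWithin (π / 2) (Iio (π / 2))) (nhds (π ^ 2 / 4)) :=
  ⟨strictMonoOn_f3, tendsto_f3_zero, tendsto_f3_pi_div_two⟩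
end

section
/- For all x with 0 < |x| ≤ π/2, one has (α - 1)·(x/sin x) + x/tan x ≤ α where α = π/(π-2), and α is the best possible constant. -/
open Real

/-- A rational upper bound for `arctan` on `[0, 1]`, sharp at both endpoints. -/
lemma arctan_le_pi_mul_div {t : ℝ} (ht0 : 0 ≤ t) (ht1 : t ≤ 1) :
    arctan t ≤ π * t / (π + (4 - π) * t ^ 2) := by
  have hpi3 := pi_gt_three
  have hpi4 : 0 < 4 - π := by linarith [pi_lt_four]
  set h : ℝ → ℝ := fun s => π * s / (π + (4 - π) * s ^ 2) - arctan s with hh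
  have hden (s : ℝ) : 0 < π + (4 - π) * s ^ 2 := by positivity
  have hderiv (s : ℝ) : HasDerivAt h
      (4 * s ^ 2 * (π * (π - 3) - (4 - π) * s ^ 2) /
        ((π + (4 - π) * s ^ 2) ^ 2 * (1 + s ^ 2))) s := by
    have hnum : HasDerivAt (fun s : ℝ => π * s) π s := by
      simpa using (hasDerivAt_id s).const_mul π
    have hdenom : HasDerivAt (fun s : ℝ => π + (4 - π) * s ^ 2) ((4 - π) * (2 * s)) s := by
      simpa using ((hasDerivAt_pow 2 s).const_mul (4 - π)).const_add π
    refine ((hnum.div hdenom (hden s).ne').sub (hasDerivAt_arctan s)).congr_deriv ?_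
    have h1 := (hden s).ne'
    have h2 : 1 + s ^ 2 ≠ 0 := by positivity
    field_simp
    ring
  have hcont : Continuous h :=
    continuous_iff_continuousAt.2 fun s => (hderiv s).continuousAt
  suffices 0 ≤ h t by simpa [hh] using this
  rcases le_total ((4 - π) * t ^ 2) (π * (π - 3)) with hle | hle
  · have hmono : MonotoneOn h (Set.Icc 0 t) := by
      refine monotoneOn_of_deriv_nonneg (convex_Icc 0 t) hcont.continuousOn
        (fun s _ => (hderiv s).differentiableAt.differentiableWithinAt) fun s hs => ?_
      rw [interior_Icc] at hs
      rw [(hderiv s).deriv]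
      have hst : s ^ 2 ≤ t ^ 2 := pow_le_pow_left₀ hs.1.le hs.2.le 2
      have : 0 ≤ π * (π - 3) - (4 - π) * s ^ 2 := by nlinarith
      positivity
    simpa [hh] using hmono (Set.left_mem_Icc.2 ht0) (Set.right_mem_Icc.2 ht0) ht0
  · have hanti : AntitoneOn h (Set.Icc t 1) := by
      refine antitoneOn_of_deriv_nonpos (convex_Icc t 1) hcont.continuousOn
        (fun s _ => (hderiv s).differentiableAt.differentiableWithinAt) fun s hs => ?_
      rw [interior_Icc] at hs
      rw [(hderiv s).deriv]
      have hst : t ^ 2 ≤ s ^ 2 := pow_le_pow_left₀ ht0 hs.1.le 2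
      have : π * (π - 3) - (4 - π) * s ^ 2 ≤ 0 := by nlinarith
      exact div_nonpos_of_nonpos_of_nonneg
        (mul_nonpos_of_nonneg_of_nonpos (by positivity) this) (by positivity)
    simpa [hh] using hanti (Set.left_mem_Icc.2 ht1) (Set.right_mem_Icc.2 ht1) ht1

lemma two_mul_add_mul_cos_le_pi_mul_sin {x : ℝ} (hx0 : 0 ≤ x) (hx : x ≤ π / 2) :
    2 * x + (π - 2) * (x * cos x) ≤ π * sin x := by
  obtain ⟨y, rfl⟩ : ∃ y, x = 2 * y := ⟨x / 2, by ring⟩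
  have hpi := pi_pos
  have hpi4 : 0 < 4 - π := by linarith [pi_lt_four]
  have hy0 : 0 ≤ y := by linarith
  have hy : y ≤ π / 4 := by linarith
  have hcos : 0 < cos y := cos_pos_of_mem_Ioo ⟨by linarith, by linarith⟩
  have htan0 : 0 ≤ tan y := tan_nonneg_of_nonneg_of_le_pi_div_two hy0 (by linarith)
  have htan1 : tan y ≤ 1 := by
    rw [← tan_pi_div_four]
    exact strictMonoOn_tan.monotoneOn ⟨by linarith, by linarith⟩ ⟨by linarith, by linarith⟩ hy
  have key := arctan_le_pi_mul_div htan0 htan1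
  rw [arctan_tan (by linarith) (by linarith), le_div_iff₀ (by positivity)] at key
  have hmul := mul_le_mul_of_nonneg_right key (sq_nonneg (cos y))
  have hsin : tan y * cos y = sin y := tan_mul_cos hcos.ne'
  have hbound : y * (π * cos y ^ 2 + (4 - π) * sin y ^ 2) ≤ π * (sin y * cos y) := by
    rw [← hsin]
    linarith
  rw [sin_two_mul, cos_two_mul]
  rw [sin_sq] at hbound
  linarith

lemma mul_div_sin_add_div_tan_le {x : ℝ} (hx0 : 0 < x) (hx : x ≤ π / 2) :
    (π / (π - 2) - 1) * (x / sin x) + x / tan x ≤ π / (π - 2) := by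
  have hpi : 0 < π - 2 := by linarith [pi_gt_three]
  have hsin : 0 < sin x := sin_pos_of_pos_of_lt_pi hx0 (by linarith)
  have hform : (π / (π - 2) - 1) * (x / sin x) + x / tan x =
      (2 * x + (π - 2) * (x * cos x)) / ((π - 2) * sin x) := by
    rw [tan_eq_sin_div_cos, div_div_eq_mul_div]
    field_simp
    ring
  rw [hform, div_le_div_iff₀ (by positivity) hpi]
  nlinarith [two_mul_add_mul_cos_le_pi_mul_sin hx0.le hx]

theorem stmt4 :
    (∀ x : ℝ, 0 < |x| → |x| ≤ π / 2 →
      (π / (π - 2) - 1) * (x / Real.sin x) + x / Real.tan x ≤ π / (π - 2)) ∧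
    (∀ α : ℝ,
      (∀ x : ℝ, 0 < |x| → |x| ≤ π / 2 →
        (α - 1) * (x / Real.sin x) + x / Real.tan x ≤ α) → α ≤ π / (π - 2)) := by
  refine ⟨fun x hx0 hx => ?_, fun α hα => ?_⟩
  · rcases abs_choice x with h | h
    · rw [h] at hx0 hx
      exact mul_div_sin_add_div_tan_le hx0 hx
    · rw [h] at hx0 hx
      simpa [neg_div_neg_eq] using mul_div_sin_add_div_tan_le hx0 hx
  · have hpos : 0 < π / 2 := by positivity
    have h := hα (π / 2) (by rwa [abs_of_pos hpos]) (abs_of_pos hpos).le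
    rw [sin_pi_div_two, tan_pi_div_two, div_one, div_zero] at h
    rw [le_div_iff₀ (by linarith [pi_gt_three])]
    linarith
end
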